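/- Let α ∈ (0,1) and let X = (X_1,…,X_n) be a vector of integrable random variables. If P(Σ_{i=1}^n X_i > Σ_{i=1}^n ES_α(X_i)) > 0, then DQ^ES_α(X) = (1/α)·inf_{r ∈ (0,∞)} E[(r·Σ_{i=1}^n (X_i − ES_α(X_i)) + 1)_+]; otherwise DQ^ES_α(X) = 0. -/

import Mathlib

open MeasureTheory ProbabilityTheory Filter Set

namespace DQ

variable {Ω : Type*} [MeasurableSpace Ω]

/-- An atomless probability measure: every non-null measurable set has a measurable
subset of strictly smaller positive measure. -/
def Atomless (P : Measure Ω) : Prop :=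
  ∀ A : Set Ω, MeasurableSet A → 0 < P A →
    ∃ B, MeasurableSet B ∧ B ⊆ A ∧ 0 < P B ∧ P B < P A

/-- Value-at-Risk at level `α` (small-`α` convention):
`VaR_α(X) = inf {x | P(X ≤ x) ≥ 1 - α}`. -/
noncomputable def VaR (P : Measure Ω) (α : ℝ) (X : Ω → ℝ) : ℝ :=
  sInf {x : ℝ | 1 - α ≤ (P {ω | X ω ≤ x}).toReal}

/-- Expected Shortfall at level `α`: `ES_α(X) = (1/α) ∫_0^α VaR_β(X) dβ`. -/
noncomputable def ES (P : Measure Ω) (α : ℝ) (X : Ω → ℝ) : ℝ :=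
  (1 / α) * ∫ β in Set.Ioo (0 : ℝ) α, VaR P β X

/-- `α* = inf {β ∈ (0,1) | VaR_β(∑ Xᵢ) ≤ ∑ VaR_α(Xᵢ)}`, with `inf ∅ = 1`. -/
noncomputable def alphaStarVaR (P : Measure Ω) (α : ℝ) {n : ℕ} (X : Fin n → Ω → ℝ) : ℝ :=
  sInf ({β ∈ Set.Ioo (0 : ℝ) 1 |
    VaR P β (fun ω => ∑ i, X i ω) ≤ ∑ i, VaR P α (X i)} ∪ {1})

/-- Diversification quotient based on VaR: `DQ^VaR_α(X) = α*/α`. -/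
noncomputable def DQVaR (P : Measure Ω) (α : ℝ) {n : ℕ} (X : Fin n → Ω → ℝ) : ℝ :=
  alphaStarVaR P α X / α

/-- `α* = inf {β ∈ (0,1) | ES_β(∑ Xᵢ) ≤ ∑ ES_α(Xᵢ)}`, with `inf ∅ = 1`. -/
noncomputable def alphaStarES (P : Measure Ω) (α : ℝ) {n : ℕ} (X : Fin n → Ω → ℝ) : ℝ :=
  sInf ({β ∈ Set.Ioo (0 : ℝ) 1 |
    ES P β (fun ω => ∑ i, X i ω) ≤ ∑ i, ES P α (X i)} ∪ {1})

/-- Diversification quotient based on ES: `DQ^ES_α(X) = α*/α`. -/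
noncomputable def DQES (P : Measure Ω) (α : ℝ) {n : ℕ} (X : Fin n → Ω → ℝ) : ℝ :=
  alphaStarES P α X / α

end DQ

open DQ in
theorem VaR_le_iff {Ω : Type*} [MeasurableSpace Ω] (P : Measure Ω) [IsProbabilityMeasure P]
    (S : Ω → ℝ) (hS : Measurable S) (u : ℝ) (hu : u ∈ Set.Ioo (0:ℝ) 1) (x : ℝ) :
    VaR P u S ≤ x ↔ 1 - u ≤ cdf (P.map S) x := by
  have := Measure.isProbabilityMeasure_map (μ := P) hS.aemeasurable
  have hc : ∀ y, (P {ω | S ω ≤ y}).toReal = cdf (P.map S) y := by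
    intro y
    rw [cdf_eq_real, Measure.real, Measure.map_apply hS measurableSet_Iic]
    rfl
  unfold VaR
  simp only [hc]
  have hbdd : BddBelow {x : ℝ | 1 - u ≤ cdf (P.map S) x} := by
    have h := (tendsto_cdf_atBot (P.map S)).eventually (gt_mem_nhds (show 0 < 1 - u by linarith [hu.2]))
    obtain ⟨a, ha⟩ := h.exists
    refine ⟨a, fun y hy => ?_⟩
    by_contra hlt
    push Not at hlt
    have := monotone_cdf (P.map S) hlt.le
    simp only [Set.mem_ofPred_eq] at hy
    linarith
  have hne : {x : ℝ | 1 - u ≤ cdf (P.map S) x}.Nonempty := by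
    have h := (tendsto_cdf_atTop (P.map S)).eventually (lt_mem_nhds (show 1 - u < 1 by linarith [hu.1]))
    obtain ⟨a, ha⟩ := h.exists
    exact ⟨a, ha.le⟩
  constructor
  · intro h
    have hr : Tendsto (cdf (P.map S)) (nhdsWithin x (Set.Ioi x)) (nhds (cdf (P.map S) x)) :=
      ((cdf (P.map S)).right_continuous x).mono Set.Ioi_subset_Ici_self
    refine ge_of_tendsto hr ?_
    filter_upwards [self_mem_nhdsWithin] with y hy
    obtain ⟨z, hz, hzy⟩ := exists_lt_of_csInf_lt hne (lt_of_le_of_lt h hy)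
    exact le_trans hz (monotone_cdf _ hzy.le)
  · intro h
    exact csInf_le hbdd h

open DQ in
theorem VaR_anti {Ω : Type*} [MeasurableSpace Ω] (P : Measure Ω) [IsProbabilityMeasure P]
    (S : Ω → ℝ) (hS : Measurable S) : AntitoneOn (fun u => VaR P u S) (Set.Ioo (0:ℝ) 1) := by
  intro a ha b hb hab
  simp only
  rw [VaR_le_iff P S hS b hb]
  have := (VaR_le_iff P S hS a ha _).1 le_rfl
  linarith

open DQ in
theorem VaR_map {Ω : Type*} [MeasurableSpace Ω] (P : Measure Ω) [IsProbabilityMeasure P]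
    (S : Ω → ℝ) (hS : Measurable S) :
    AEMeasurable (fun u => VaR P u S) (volume.restrict (Set.Ioo (0:ℝ) 1)) ∧
    (volume.restrict (Set.Ioo (0:ℝ) 1)).map (fun u => VaR P u S) = P.map S := by
  have hm := aemeasurable_restrict_of_antitoneOn (μ := volume) measurableSet_Ioo (VaR_anti P S hS)
  refine ⟨hm, ?_⟩
  have := Measure.isProbabilityMeasure_map (μ := P) hS.aemeasurable
  have : IsFiniteMeasure (volume.restrict (Set.Ioo (0:ℝ) 1)) := ⟨by simp⟩
  refine Measure.ext_of_Iic _ _ fun x => ?_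
  rw [Measure.map_apply_of_aemeasurable hm measurableSet_Iic, Measure.restrict_apply' measurableSet_Ioo]
  have h0 := cdf_nonneg (P.map S) x
  have h1 := cdf_le_one (P.map S) x
  have he : (fun u => VaR P u S) ⁻¹' Set.Iic x ∩ Set.Ioo 0 1
      = Set.Ici (1 - cdf (P.map S) x) ∩ Set.Ioo 0 1 := by
    ext u
    simp only [Set.mem_inter_iff, Set.mem_preimage, Set.mem_Iic, Set.mem_Ici]
    constructor
    · rintro ⟨h, hu⟩
      have := (VaR_le_iff P S hS u hu x).1 h
      exact ⟨by linarith, hu⟩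
    · rintro ⟨h, hu⟩
      exact ⟨(VaR_le_iff P S hS u hu x).2 (by linarith), hu⟩
  rw [he, ← ofReal_cdf (P.map S) x]
  apply le_antisymm
  · calc _ ≤ volume (Set.Icc (1 - cdf (P.map S) x) 1) :=
          measure_mono (fun u hu => ⟨hu.1, hu.2.2.le⟩)
      _ = _ := by rw [Real.volume_Icc]; congr 1; ring
  · calc _ = volume (Set.Ioo (1 - cdf (P.map S) x) 1) := by rw [Real.volume_Ioo]; congr 1; ring
      _ ≤ _ := measure_mono (fun u (hu : u ∈ Set.Ioo _ _) =>
          (⟨hu.1.le, by linarith [hu.1], hu.2⟩ : u ∈ Set.Ici _ ∩ Set.Ioo _ _))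

open DQ in
theorem VaR_integral {Ω : Type*} [MeasurableSpace Ω] (P : Measure Ω) [IsProbabilityMeasure P]
    (S : Ω → ℝ) (hS : Measurable S) (hi : Integrable S P) :
    IntegrableOn (fun u => VaR P u S) (Set.Ioo (0:ℝ) 1) ∧
    ∀ x, ∫ u in Set.Ioo (0:ℝ) 1, max (VaR P u S - x) 0 = ∫ ω, max (S ω - x) 0 ∂P := by
  obtain ⟨hm, he⟩ := VaR_map P S hS
  constructor
  · have h1 : Integrable id (P.map S) := (integrable_map_measure aestronglyMeasurable_id hS.aemeasurable).2 hi
    rw [← he] at h1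
    exact (integrable_map_measure aestronglyMeasurable_id hm).1 h1
  · intro x
    have hf : Continuous (fun y : ℝ => max (y - x) 0) := by fun_prop
    have h1 := integral_map (μ := P) hS.aemeasurable (f := fun y : ℝ => max (y - x) 0) hf.aestronglyMeasurable
    have h2 := integral_map hm (f := fun y : ℝ => max (y - x) 0) hf.aestronglyMeasurable
    rw [← h1, ← h2, he]

open DQ in
theorem ES_RU {Ω : Type*} [MeasurableSpace Ω] (P : Measure Ω) [IsProbabilityMeasure P]
    (S : Ω → ℝ) (hS : Measurable S) (hi : Integrable S P) (β : ℝ) (hβ : β ∈ Set.Ioo (0:ℝ) 1) :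
    (∀ x, β * ES P β S ≤ β * x + ∫ ω, max (S ω - x) 0 ∂P) ∧
    (∃ x, β * ES P β S = β * x + ∫ ω, max (S ω - x) 0 ∂P) := by
  obtain ⟨hI, hE⟩ := VaR_integral P S hS hi
  have hsub : Set.Ioo (0:ℝ) β ⊆ Set.Ioo 0 1 := Set.Ioo_subset_Ioo_right hβ.2.le
  have hIβ := hI.mono_set hsub
  have hES : β * ES P β S = ∫ u in Set.Ioo (0:ℝ) β, VaR P u S := by
    unfold ES
    have := hβ.1.ne'
    field_simp
  have hfin : ∀ b x : ℝ, IntegrableOn (fun _ : ℝ => x) (Set.Ioo 0 b) := fun b x =>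
    integrableOn_const (by simp)
  have hIx : ∀ x, IntegrableOn (fun u => max (VaR P u S - x) 0) (Set.Ioo (0:ℝ) 1) :=
    fun x => (hI.sub (hfin 1 x)).pos_part
  have hsplit : ∀ x, ∫ u in Set.Ioo (0:ℝ) β, (x + max (VaR P u S - x) 0)
      = β * x + ∫ u in Set.Ioo (0:ℝ) β, max (VaR P u S - x) 0 := by
    intro x
    rw [integral_add (hfin β x) ((hIx x).mono_set hsub)]
    simp [hβ.1.le]
  constructor
  · intro x
    rw [hES, ← hE x]
    calc _ ≤ ∫ u in Set.Ioo (0:ℝ) β, (x + max (VaR P u S - x) 0) := by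
          refine integral_mono hIβ ((hfin β x).add ((hIx x).mono_set hsub)) fun u => ?_
          simp only
          linarith [le_max_left (VaR P u S - x) 0]
      _ = _ := hsplit x
      _ ≤ _ := by
          refine add_le_add le_rfl ?_
          refine setIntegral_mono_set (hIx x) ?_ hsub.eventuallyLE
          exact Eventually.of_forall fun u => le_max_right _ _
  · refine ⟨VaR P β S, ?_⟩
    rw [hES, ← hE]
    have h1 : ∫ u in Set.Ioo (0:ℝ) β, VaR P u S
        = ∫ u in Set.Ioo (0:ℝ) β, (VaR P β S + max (VaR P u S - VaR P β S) 0) := by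
      refine setIntegral_congr_fun measurableSet_Ioo fun u hu => ?_
      have := VaR_anti P S hS (hsub hu) hβ hu.2.le
      simp only at this ⊢
      rw [max_eq_left (by linarith)]; ring
    rw [h1, hsplit]
    congr 1
    symm
    refine setIntegral_eq_of_subset_of_forall_sdiff_eq_zero measurableSet_Ioo hsub fun u hu => ?_
    have hle : β ≤ u := by
      by_contra h
      exact hu.2 ⟨hu.1.1, not_le.1 h⟩
    have := VaR_anti P S hS hβ hu.1 hle
    simp only at this
    rw [max_eq_right (by linarith)]

open DQ in
theorem dq_key {Ω : Type*} [MeasurableSpace Ω] (P : Measure Ω) [IsProbabilityMeasure P]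
    (S : Ω → ℝ) (hS : Measurable S) (hi : Integrable S P) (t : ℝ) :
    (0 < P {ω | t < S ω} →
      sInf ({β ∈ Set.Ioo (0 : ℝ) 1 | ES P β S ≤ t} ∪ {1}) =
        sInf ((fun r : ℝ => ∫ ω, max (r * (S ω - t) + 1) 0 ∂P) '' Set.Ioi 0)) ∧
    (P {ω | t < S ω} = 0 → sInf ({β ∈ Set.Ioo (0 : ℝ) 1 | ES P β S ≤ t} ∪ {1}) = 0) := by
  have hpi : ∀ x, Integrable (fun ω => max (S ω - x) 0) P :=
    fun x => (hi.sub (integrable_const x)).pos_part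
  have hbd : BddBelow ({β ∈ Set.Ioo (0 : ℝ) 1 | ES P β S ≤ t} ∪ {1}) := by
    refine ⟨0, ?_⟩
    rintro β (hβ | hβ)
    · exact hβ.1.1.le
    · rw [Set.mem_singleton_iff.1 hβ]; norm_num
  constructor
  · intro hpos
    have hposI : 0 < ∫ ω, max (S ω - t) 0 ∂P := by
      have hnn : (0 : Ω → ℝ) ≤ fun ω => max (S ω - t) 0 := fun ω => le_max_right _ _
      rw [integral_pos_iff_support_of_nonneg hnn (hpi t)]
      convert hpos using 2
      ext ω
      simp
    have hscale : ∀ r : ℝ, 0 < r → ∫ ω, max (r * (S ω - t) + 1) 0 ∂P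
        = r * ∫ ω, max (S ω - (t - 1 / r)) 0 ∂P := by
      intro r hr
      rw [← integral_const_mul]
      congr 1
      ext ω
      rw [mul_max_of_nonneg _ _ hr.le]
      congr 1
      · field_simp; ring
      · simp
    have hfpos : ∀ r : ℝ, 0 < r → 0 < ∫ ω, max (r * (S ω - t) + 1) 0 ∂P := by
      intro r hr
      rw [hscale r hr]
      refine mul_pos hr (lt_of_lt_of_le hposI (integral_mono (hpi _) (hpi _) fun ω => ?_))
      have : 0 < 1 / r := by positivity
      exact max_le_max (by linarith) le_rfl
    have hbd2 : BddBelow ((fun r : ℝ => ∫ ω, max (r * (S ω - t) + 1) 0 ∂P) '' Set.Ioi 0) := by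
      refine ⟨0, ?_⟩
      rintro _ ⟨r, hr, rfl⟩
      exact (hfpos r hr).le
    apply le_antisymm
    · refine le_csInf ⟨_, 1, by simp, rfl⟩ ?_
      rintro _ ⟨r, hr, rfl⟩
      have hr : 0 < r := hr
      simp only
      have hp := hfpos r hr
      rcases lt_or_ge (∫ ω, max (r * (S ω - t) + 1) 0 ∂P) 1 with h | h
      · refine csInf_le hbd (Or.inl ⟨⟨hp, h⟩, ?_⟩)
        have h1 := (ES_RU P S hS hi _ ⟨hp, h⟩).1 (t - 1 / r)
        have h2 := hscale r hr
        set b := ∫ ω, max (r * (S ω - t) + 1) 0 ∂P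
        have h3 : ∫ ω, max (S ω - (t - 1 / r)) 0 ∂P = b * (1 / r) := by
          rw [h2, mul_comm, ← mul_assoc, one_div_mul_cancel hr.ne', one_mul]
        rw [h3] at h1
        have h4 : b * ES P b S ≤ b * t := by linarith
        exact le_of_mul_le_mul_left h4 hp
      · exact le_trans (csInf_le hbd (Or.inr rfl)) h
    · refine le_csInf ⟨1, Or.inr rfl⟩ ?_
      rintro β (⟨hβ, hle⟩ | hβ)
      · obtain ⟨x, hx⟩ := (ES_RU P S hS hi β hβ).2
        have h1 : β * x + ∫ ω, max (S ω - x) 0 ∂P ≤ β * t := by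
          rw [← hx]; exact mul_le_mul_of_nonneg_left hle hβ.1.le
        have hxt : x < t := by
          by_contra hcon
          push Not at hcon
          have h2 : 0 ≤ ∫ ω, max (S ω - x) 0 ∂P := integral_nonneg fun ω => le_max_right _ _
          have h3 : β * t ≤ β * x := mul_le_mul_of_nonneg_left hcon hβ.1.le
          have h4 : β * x ≤ β * t := by linarith
          have h5 : x ≤ t := le_of_mul_le_mul_left h4 hβ.1
          have h6 : x = t := le_antisymm h5 hcon
          subst h6
          linarith
        have hr : 0 < 1 / (t - x) := by
          have : 0 < t - x := by linarith
          positivity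
        refine le_trans (csInf_le hbd2 ⟨1 / (t - x), hr, rfl⟩) ?_
        simp only
        rw [hscale _ hr]
        have : t - 1 / (1 / (t - x)) = x := by rw [one_div_one_div]; ring
        rw [this, one_div, inv_mul_le_iff₀ (by linarith)]
        linarith
      · rw [Set.mem_singleton_iff.1 hβ]
        have hb : ∀ r : ℝ, 0 < r →
            sInf ((fun r : ℝ => ∫ ω, max (r * (S ω - t) + 1) 0 ∂P) '' Set.Ioi 0)
              ≤ r * (∫ ω, max (S ω - t) 0 ∂P) + 1 := by
          intro r hr
          refine le_trans (csInf_le hbd2 ⟨r, hr, rfl⟩) ?_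
          simp only
          have : r * (∫ ω, max (S ω - t) 0 ∂P) + 1 = ∫ ω, (r * max (S ω - t) 0 + 1) ∂P := by
            rw [integral_add ((hpi t).const_mul r) (integrable_const 1), integral_const_mul]
            simp
          rw [this]
          refine integral_mono ?_ (((hpi t).const_mul r).add (integrable_const 1)) fun ω => ?_
          · exact (((hi.sub (integrable_const t)).const_mul r).add (integrable_const 1)).pos_part
          · have h1 := mul_le_mul_of_nonneg_left (le_max_left (S ω - t) 0) hr.le
            have h2 := mul_nonneg hr.le (le_max_right (S ω - t) 0)
            exact max_le (by simp only; linarith) (by simp only; linarith)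
        refine le_of_forall_pos_le_add fun ε hε => ?_
        have := hb (ε / ∫ ω, max (S ω - t) 0 ∂P) (by positivity)
        rw [div_mul_cancel₀ _ hposI.ne'] at this
        linarith
  · intro hz
    have hI0 : ∫ ω, max (S ω - t) 0 ∂P = 0 := by
      apply integral_eq_zero_of_ae
      have : ∀ᵐ ω ∂P, ¬ (t < S ω) := by
        rw [ae_iff]; simpa using hz
      filter_upwards [this] with ω hω
      simp only [Pi.zero_apply]
      exact max_eq_right (by linarith)
    have hmem : ∀ β ∈ Set.Ioo (0:ℝ) 1, ES P β S ≤ t := by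
      intro β hβ
      have := (ES_RU P S hS hi β hβ).1 t
      rw [hI0, add_zero] at this
      exact le_of_mul_le_mul_left this hβ.1
    apply le_antisymm
    · refine le_of_forall_pos_le_add fun ε hε => ?_
      have hm : min ε (1/2) ∈ Set.Ioo (0:ℝ) 1 :=
        ⟨lt_min hε (by norm_num), lt_of_le_of_lt (min_le_right _ _) (by norm_num)⟩
      have := csInf_le hbd (Or.inl ⟨hm, hmem _ hm⟩)
      linarith [min_le_left ε (1/2)]
    · refine le_csInf ⟨1, Or.inr rfl⟩ ?_
      rintro β (hβ | hβ)
      · exact hβ.1.1.le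
      · rw [Set.mem_singleton_iff.1 hβ]; norm_num

open DQ in
/-- If P(∑ Xᵢ > ∑ ES_α(Xᵢ)) > 0 then
DQ^ES_α(X) = (1/α)·inf_{r>0} E[(r·∑(Xᵢ − ES_α(Xᵢ)) + 1)₊]; otherwise DQ^ES_α(X) = 0. -/
theorem stmt11 {Ω : Type*} [MeasurableSpace Ω] (P : Measure Ω) [IsProbabilityMeasure P]
    (hP : Atomless P) (n : ℕ) (X : Fin n → Ω → ℝ) (hX : ∀ i, Measurable (X i))
    (hint : ∀ i, Integrable (X i) P) (α : ℝ) (hα : α ∈ Set.Ioo (0 : ℝ) 1) :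
    (0 < P {ω | (∑ i, ES P α (X i)) < ∑ i, X i ω} →
      DQES P α X = (1 / α) *
        sInf ((fun r : ℝ =>
            ∫ ω, max (r * (∑ i, (X i ω - ES P α (X i))) + 1) 0 ∂P) '' Set.Ioi 0)) ∧
    (P {ω | (∑ i, ES P α (X i)) < ∑ i, X i ω} = 0 → DQES P α X = 0) := by
  unfold DQES alphaStarES
  simp only [Finset.sum_sub_distrib]
  have hS : Measurable (fun ω => ∑ i, X i ω) := Finset.measurable_sum _ fun i _ => hX i
  have hi : Integrable (fun ω => ∑ i, X i ω) P := integrable_finsetSum _ fun i _ => hint i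
  obtain ⟨h1, h2⟩ := dq_key P _ hS hi (∑ i, ES P α (X i))
  constructor
  · intro h
    rw [h1 h]
    ring
  · intro h
    rw [h2 h, zero_div]
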